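/- Let A be a ring and let E denote the category of endomorphisms of cochain complexes of A-modules: its objects are pairs (M, α) where M is a cochain complex of A-modules and α : M → M is a chain map, and its morphisms (M, α) → (M', α') are chain maps h : M → M' with h∘α = α'∘h. Let W be the class of morphisms of E whose underlying chain map is a quasi-isomorphism. Then for every object (M, α) of E such that M is perfect (i.e., M is connected by a zig-zag of quasi-isomorphisms of complexes of A-modules to a bounded cochain complex of finitely generated projective A-modules), there exist a bounded cochain complex P of finitely generated projective A-modules and a chain endomorphism β : P → P such that (P, β) and (M, α) become isomorphic in the localization E[W⁻¹] of E at W. (In other words, the inclusion of the endomorphism category of bounded complexes of finitely generated projectives into the endomorphism category of perfect complexes is homotopically essentially surjective.) -/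

import Mathlib

/-!
A bounded complex `P` of projectives is K-projective, so homotopy classes of maps out of `P` are
the same as maps in the derived category. Hence a zig-zag between `M` and `P` yields a single
quasi-isomorphism `f : P ⟶ M` (`exists_quasiIso_of_zigzag`), and `f ≫ α` lifts through `f` to some
`β : P ⟶ P` with a homotopy `β ≫ f ≃ f ≫ α` (`exists_lift`).

The map `f` need not be a morphism `(P, β) ⟶ (M, α)`, as the square commutes only up to homotopy.
The mapping cylinder of `f` repairs this: `β`, `α` and the homotopy together define an endomorphism
`γ` of the cylinder such that both inclusions strictly commute with the endomorphisms
(`MapCyl.exists_endo`). The inclusion of `M` is always a homotopy equivalence, and the inclusion of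
`P` is homotopic to `f` followed by it, so both are quasi-isomorphisms. The cospan
`(P, β) ⟶ (cyl f, γ) ⟵ (M, α)` becomes an isomorphism in the localization.
-/


open CategoryTheory CategoryTheory.Limits

universe u

/-- The category of endomorphisms of cochain complexes of `A`-modules:
objects are pairs `(M, α)` with `M` a cochain complex of `A`-modules and
`α : M ⟶ M` a chain map. -/
structure EndoComplex (A : Type u) [Ring A] : Type (u + 1) where
  M : CochainComplex (ModuleCat.{u} A) ℤ
  α : M ⟶ M

/-- Morphisms `(M, α) ⟶ (M', α')` are chain maps `h` with `h ∘ α = α' ∘ h`. -/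
instance EndoComplex.category (A : Type u) [Ring A] :
    Category (EndoComplex A) where
  Hom N N' := {h : N.M ⟶ N'.M // N.α ≫ h = h ≫ N'.α}
  id N := ⟨𝟙 N.M, by simp⟩
  comp f g := ⟨f.1 ≫ g.1, by
    rw [← Category.assoc, f.2, Category.assoc, g.2, Category.assoc]⟩
  id_comp f := by apply Subtype.ext; simp
  comp_id f := by apply Subtype.ext; simp
  assoc f g h := by apply Subtype.ext; simp

/-- The class `W` of morphisms of the endomorphism category whose underlying
chain map is a quasi-isomorphism. -/
def EndoComplex.W (A : Type u) [Ring A] : MorphismProperty (EndoComplex A) :=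
  fun _ _ h => QuasiIso h.1

/-- Two complexes are related if there is a quasi-isomorphism from one to the other
(in either direction); the reflexive-transitive closure of this relation expresses
being connected by a zig-zag of quasi-isomorphisms. -/
def qisoStep (A : Type u) [Ring A]
    (X Y : CochainComplex (ModuleCat.{u} A) ℤ) : Prop :=
  (∃ f : X ⟶ Y, QuasiIso f) ∨ (∃ g : Y ⟶ X, QuasiIso g)

/-- A cochain complex is a bounded complex of finitely generated projective modules
if it vanishes outside finitely many degrees and all its terms are finitely generated
projective. -/
def IsBoundedFGProj (A : Type u) [Ring A]
    (P : CochainComplex (ModuleCat.{u} A) ℤ) : Prop :=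
  (∃ a b : ℤ, ∀ i : ℤ, (i < a ∨ b < i) → IsZero (P.X i)) ∧
  (∀ i : ℤ, Module.Finite A (P.X i) ∧ Module.Projective A (P.X i))

/-- A cochain complex is perfect if it is connected by a zig-zag of
quasi-isomorphisms to a bounded complex of finitely generated projectives. -/
def IsPerfectComplex (A : Type u) [Ring A]
    (M : CochainComplex (ModuleCat.{u} A) ℤ) : Prop :=
  ∃ P : CochainComplex (ModuleCat.{u} A) ℤ,
    IsBoundedFGProj A P ∧ Relation.ReflTransGen (qisoStep A) M P

theorem EndoComplex.nonempty_iso_of_zigzag (A : Type u) [Ring A] [HasDerivedCategory (ModuleCat.{u} A)]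
    {X Y : CochainComplex (ModuleCat.{u} A) ℤ} (h : Relation.ReflTransGen (qisoStep A) X Y) :
    Nonempty (DerivedCategory.Q.obj X ≅ DerivedCategory.Q.obj Y) := by
  induction h with
  | refl => exact ⟨Iso.refl _⟩
  | tail _ h ih =>
    obtain ⟨e⟩ := ih
    rcases h with ⟨f, hf⟩ | ⟨g, hg⟩
    · exact ⟨e ≪≫ asIso (DerivedCategory.Q.map f)⟩
    · exact ⟨e ≪≫ (asIso (DerivedCategory.Q.map g)).symm⟩

theorem IsBoundedFGProj.isKProjective {A : Type u} [Ring A]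
    {P : CochainComplex (ModuleCat.{u} A) ℤ} (hP : IsBoundedFGProj A P) : P.IsKProjective := by
  obtain ⟨⟨a, b, hab⟩, hP⟩ := hP
  have : P.IsStrictlyLE b := by
    rw [CochainComplex.isStrictlyLE_iff]
    exact fun i hi => hab i (Or.inr hi)
  have (n : ℤ) : Projective (P.X n) := by
    have := (hP n).2
    exact ModuleCat.projective_of_categoryTheory_projective _
  exact CochainComplex.isKProjective_of_projective P b

section
open DerivedCategory

variable {A : Type u} [Ring A]

attribute [local instance] HasDerivedCategory.standard in
/-- A zig-zag ending at a K-projective complex can be replaced by one quasi-isomorphism out of it. -/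
theorem exists_quasiIso_of_zigzag {P M : CochainComplex (ModuleCat.{u} A) ℤ} [P.IsKProjective]
    (h : Relation.ReflTransGen (qisoStep A) M P) : ∃ f : P ⟶ M, QuasiIso f := by
  obtain ⟨e⟩ := EndoComplex.nonempty_iso_of_zigzag A h
  obtain ⟨g, hg⟩ := (CochainComplex.IsKProjective.Qh_map_bijective P _).surjective
    ((quotientCompQhIso _).hom.app P ≫ e.inv ≫ (quotientCompQhIso _).inv.app M)
  obtain ⟨f, rfl⟩ := (HomotopyCategory.quotient _ _).map_surjective g
  refine ⟨f, ?_⟩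
  rw [← DerivedCategory.isIso_Q_map_iff_quasiIso]
  have : Q.map f = e.inv := by
    have := (quotientCompQhIso (ModuleCat.{u} A)).hom.naturality f
    dsimp at this
    rw [hg] at this
    simpa using this.symm
  rw [this]
  infer_instance

attribute [local instance] HasDerivedCategory.standard in
/-- Maps out of a K-projective complex lift through quasi-isomorphisms up to homotopy. -/
theorem exists_lift {P M N : CochainComplex (ModuleCat.{u} A) ℤ} [P.IsKProjective]
    (f : M ⟶ N) [QuasiIso f] (g : P ⟶ N) : ∃ b : P ⟶ M, Nonempty (Homotopy (b ≫ f) g) := by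
  obtain ⟨b, hb⟩ := (CochainComplex.IsKProjective.Qh_map_bijective P _).surjective
    ((quotientCompQhIso _).hom.app P ≫ Q.map g ≫ inv (Q.map f) ≫ (quotientCompQhIso _).inv.app M)
  obtain ⟨b, rfl⟩ := (HomotopyCategory.quotient _ _).map_surjective b
  refine ⟨b, ⟨HomotopyCategory.homotopyOfEq _ _ ?_⟩⟩
  apply (CochainComplex.IsKProjective.Qh_map_bijective P _).injective
  rw [Functor.map_comp, Functor.map_comp, hb]
  have h1 := (quotientCompQhIso (ModuleCat.{u} A)).inv.naturality f
  have h2 := (quotientCompQhIso (ModuleCat.{u} A)).hom.naturality g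
  dsimp at h1 h2
  simp only [Category.assoc]
  rw [← h1, IsIso.inv_hom_id_assoc, ← Category.assoc, ← h2, Category.assoc, Iso.hom_inv_id_app]
  exact Category.comp_id _

end

namespace MapCyl
open CochainComplex CochainComplex.HomComplex

variable {A : Type u} [Ring A] {P M : CochainComplex (ModuleCat.{u} A) ℤ} (f : P ⟶ M)

/-- The map `(1, -f)`, whose cone is the mapping cylinder of `f`. -/
noncomputable abbrev φ : P ⟶ P ⊞ M := biprod.lift (𝟙 P) (-f)

/-- The mapping cylinder of `f`, encoded as the cone of `(1, -f) : P ⟶ P ⊞ M`: the homotopy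
pushout of `𝟙 P` and `f`. -/
noncomputable abbrev cyl : CochainComplex (ModuleCat.{u} A) ℤ := mappingCone (φ f)

/-- The inclusion of the source `P` of `f` in its mapping cylinder. -/
noncomputable def i : P ⟶ cyl f := biprod.inl ≫ mappingCone.inr (φ f)
/-- The inclusion of the target `M` of `f` in its mapping cylinder. -/
noncomputable def j : M ⟶ cyl f := biprod.inr ≫ mappingCone.inr (φ f)

theorem φ_inr : φ f ≫ mappingCone.inr (φ f) = i f - f ≫ j f := by
  simp [i, j, φ, biprod.lift_eq, sub_eq_add_neg]

/-- The projection of the mapping cylinder onto the target `M`: `f` on `P`, the identity on `M`,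
and zero on the shifted copy of `P`. -/
noncomputable def π : cyl f ⟶ M :=
  mappingCone.desc (φ f) 0 (biprod.desc f (𝟙 M)) (by simp [φ])

theorem j_π : j f ≫ π f = 𝟙 M := by simp [j, π]

/-- The tautological homotopy of the cylinder, given by the shifted copy of `P`. -/
noncomputable def homotopyI : Homotopy (i f) (f ≫ j f) :=
  (Cochain.equivHomotopy _ _).symm ⟨mappingCone.inl (φ f), by
    rw [mappingCone.δ_inl, φ_inr]; simp⟩

/-- The cylinder contracts onto `M`: minus the tautological homotopy on `P`, extended by zero,
contracts `π ≫ j` to the identity. -/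
noncomputable def homotopyπ : Homotopy (π f ≫ j f) (𝟙 _) :=
  mappingCone.descHomotopy _ _ _ 0
    (-(Cochain.ofHom biprod.fst).comp (mappingCone.inl (φ f)) (zero_add _))
    (by
      ext p q hpq
      simp [π, φ, Cochain.comp_v _ _ (zero_add (-1)) p p q (add_zero p) hpq,
        Cochain.comp_v _ _ (add_zero (-1)) p q q hpq (add_zero q)])
    (by
      rw [δ_neg, δ_ofHom_comp, mappingCone.δ_inl, ← Cochain.ofHom_comp, φ_inr,
        ← Cochain.ofHom_neg, ← Cochain.ofHom_add]
      congr 1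
      apply biprod.hom_ext' <;> simp [π, i, j])

/-- The inclusion of `M` in the mapping cylinder is a homotopy equivalence. -/
noncomputable def equivM : HomotopyEquiv M (cyl f) where
  hom := j f
  inv := π f
  homotopyHomInvId := Homotopy.ofEq (j_π f)
  homotopyInvHomId := homotopyπ f

instance : QuasiIso (j f) := (equivM f).quasiIso_hom

instance [QuasiIso f] : QuasiIso (i f) := by
  have : QuasiIso (f ≫ j f) := inferInstance
  rw [quasiIso_iff] at this ⊢
  intro n
  have := this n
  rw [quasiIsoAt_iff_isIso_homologyMap] at this ⊢
  rwa [(homotopyI f).homologyMap_eq]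

variable {f} {β : P ⟶ P} {α : M ⟶ M}

/-- A square `β ≫ f ≃ f ≫ α` commuting up to homotopy becomes a strictly commuting one on the
mapping cylinder: there is an endomorphism of the cylinder that restricts to `β` on `P` and to `α`
on `M`. The homotopy enters through the component of this endomorphism from the shifted copy of
`P` to `M`. -/
theorem exists_endo (H : Homotopy (β ≫ f) (f ≫ α)) :
    ∃ γ : cyl f ⟶ cyl f, i f ≫ γ = β ≫ i f ∧ j f ≫ γ = α ≫ j f := by
  refine ⟨mappingCone.desc (φ f)
    ((Cochain.ofHom β).comp (mappingCone.inl (φ f)) (zero_add _) +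
      (Cochain.ofHomotopy H).comp (Cochain.ofHom (j f)) (add_zero _))
    (biprod.map β α ≫ mappingCone.inr (φ f)) ?_, ?_, ?_⟩
  · rw [δ_add, δ_ofHom_comp, δ_comp_ofHom, mappingCone.δ_inl, δ_ofHomotopy, φ_inr,
      ← Cochain.ofHom_sub, ← Cochain.ofHom_comp, ← Cochain.ofHom_comp, ← Cochain.ofHom_add]
    congr 1
    simp [i, j, φ, biprod.lift_eq]
    abel
  · simp [i]
  · simp [j]

end MapCyl

/-- for every endomorphism `α` of a perfect complex `M` of `A`-modules,
there are a bounded complex `P` of finitely generated projective `A`-modules and an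
endomorphism `β` of `P` such that `(P, β)` and `(M, α)` become isomorphic in the
localization `E[W⁻¹]` of the endomorphism category `E` at the class `W` of morphisms
whose underlying chain map is a quasi-isomorphism. -/
theorem endo_of_perfect_complex_essentially_surjective
    (A : Type u) [Ring A]
    (M : CochainComplex (ModuleCat.{u} A) ℤ) (α : M ⟶ M)
    (hM : IsPerfectComplex A M) :
    ∃ (P : CochainComplex (ModuleCat.{u} A) ℤ) (β : P ⟶ P),
      IsBoundedFGProj A P ∧
      Nonempty ((EndoComplex.W A).Q.obj ⟨P, β⟩ ≅ (EndoComplex.W A).Q.obj ⟨M, α⟩) := by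
  obtain ⟨P, hP, hz⟩ := hM
  have := hP.isKProjective
  obtain ⟨f, hf⟩ := exists_quasiIso_of_zigzag hz
  obtain ⟨β, ⟨H⟩⟩ := exists_lift f (f ≫ α)
  obtain ⟨γ, hi, hj⟩ := MapCyl.exists_endo H
  let u : (⟨P, β⟩ : EndoComplex A) ⟶ ⟨MapCyl.cyl f, γ⟩ := ⟨MapCyl.i f, hi.symm⟩
  let v : (⟨M, α⟩ : EndoComplex A) ⟶ ⟨MapCyl.cyl f, γ⟩ := ⟨MapCyl.j f, hj.symm⟩
  have hu : EndoComplex.W A u := inferInstanceAs (QuasiIso (MapCyl.i f))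
  have hv : EndoComplex.W A v := inferInstanceAs (QuasiIso (MapCyl.j f))
  exact ⟨P, β, hP, ⟨Localization.isoOfHom (EndoComplex.W A).Q _ u hu ≪≫
    (Localization.isoOfHom (EndoComplex.W A).Q _ v hv).symm⟩⟩
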